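/- Suppose the sequences γ = (r_k)_{k≥0}, σ = (s_k)_{k≥0}, τ = (t_k)_{k≥1} of q-nonnegative polynomials are such that there exist q-nonnegative polynomials b_k, c_k (k ≥ 0) with r_k = 1, s_k = b_k + c_k, and t_{k+1} = b_{k+1}·c_k for all k ≥ 0. Then both the Catalan–Stieltjes matrix C^{γ,σ,τ} and the Hankel matrix H^{γ,σ,τ} are q-totally positive. -/

import Mathlib

/-!
The matrix `c` satisfies `c (n + 1) · = (c n ·) J`, where `J` is tridiagonal with entries
`1, s k, t (k + 1)`. The hypothesis says exactly that `J = U L` with `U` upper bidiagonal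
(diagonal `b`, superdiagonal `1`) and `L` lower bidiagonal (diagonal `1`, subdiagonal `c'`).
Multiplying on the right by a `q`-nonnegative bidiagonal matrix keeps all minors with a given set of
rows `q`-nonnegative: expanding the columns multilinearly, the new column indices are still
weakly increasing, so each minor obtained either has a repeated column or is a minor of
the original matrix (`ColPos.bidiag`). Induction on the rows then shows that `c` is
`q`-totally positive; a minor using row `0 = (1, 0, 0, …)` reduces to a smaller one (`colPos_rows`).

For the Hankel matrix, symmetry of `J` with respect to the weights `T k = t 1 ⋯ t k` gives
`c (i + j) 0 = ∑ k, c i k * T k * c j k` (`hankel_eq`), that is `H = C T Cᵀ`, and the Cauchy–Binet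
formula finishes. It is used in the symmetrised form `m! det (A B) = ∑ f, det A_f det B_f`, over all
maps `f`, in which every summand is a product of two `q`-nonnegative minors after sorting `f`
(`factorial_mul_det`).
-/

open Polynomial

/-- A polynomial is `q`-nonnegative if all of its coefficients are nonnegative. -/
def QNonneg (f : Polynomial ℝ) : Prop := ∀ i, 0 ≤ f.coeff i

/-- An infinite matrix is `q`-totally positive if every minor (determinant of a square
submatrix with strictly increasing row and column indices) is `q`-nonnegative. -/
def QTP (M : ℕ → ℕ → Polynomial ℝ) : Prop :=
  ∀ (m : ℕ), 1 ≤ m → ∀ (i j : Fin m → ℕ), StrictMono i → StrictMono j →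
    QNonneg (Matrix.det (Matrix.of fun a b => M (i a) (j b)))

/-! ### Closure properties of `q`-nonnegative polynomials -/

theorem qNonneg_zero : QNonneg 0 := fun i => by simp

theorem qNonneg_one : QNonneg 1 := fun i => by
  rw [coeff_one]; split_ifs <;> norm_num

theorem QNonneg.add {f g : Polynomial ℝ} (hf : QNonneg f) (hg : QNonneg g) : QNonneg (f + g) :=
  fun i => by rw [coeff_add]; exact add_nonneg (hf i) (hg i)

theorem QNonneg.mul {f g : Polynomial ℝ} (hf : QNonneg f) (hg : QNonneg g) : QNonneg (f * g) :=
  fun i => by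
    rw [coeff_mul]
    exact Finset.sum_nonneg fun x _ => mul_nonneg (hf _) (hg _)

theorem qNonneg_sum {ι : Type*} (s : Finset ι) (f : ι → Polynomial ℝ)
    (h : ∀ i ∈ s, QNonneg (f i)) : QNonneg (∑ i ∈ s, f i) :=
  Finset.sum_induction f QNonneg (fun _ _ => QNonneg.add) qNonneg_zero h

theorem qNonneg_prod {ι : Type*} (s : Finset ι) (f : ι → Polynomial ℝ)
    (h : ∀ i ∈ s, QNonneg (f i)) : QNonneg (∏ i ∈ s, f i) :=
  Finset.prod_induction f QNonneg (fun _ _ => QNonneg.mul) qNonneg_one h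

theorem QNonneg.of_natCast_mul {n : ℕ} (hn : 0 < n) {f : Polynomial ℝ}
    (h : QNonneg ((n : Polynomial ℝ) * f)) : QNonneg f := fun i => by
  have h1 := h i
  rw [coeff_natCast_mul] at h1
  exact nonneg_of_mul_nonneg_right h1 (by exact_mod_cast hn)

/-! ### Multilinear expansion and Cauchy–Binet -/

theorem det_sum_columns {m : ℕ} {ι : Type*} [Fintype ι] [DecidableEq ι]
    (w : Fin m → ι → Polynomial ℝ) (φ : Fin m → ι → ℕ) (M : Fin m → ℕ → Polynomial ℝ) :
    Matrix.det (Matrix.of fun a b => ∑ x, w b x * M a (φ b x)) =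
      ∑ f : Fin m → ι, (∏ b, w b (f b)) *
        Matrix.det (Matrix.of fun a b => M a (φ b (f b))) := by
  have h := (Matrix.detRowAlternating (n := Fin m) (R := Polynomial ℝ)).toMultilinearMap.map_sum
    (fun (b : Fin m) (x : ι) => (w b x • fun a => M a (φ b x) : Fin m → Polynomial ℝ))
  rw [← Matrix.det_transpose]
  have e : (Matrix.of fun a b => ∑ x, w b x * M a (φ b x)).transpose =
      fun b => ∑ x, (w b x • fun a => M a (φ b x) : Fin m → Polynomial ℝ) := by
    funext b a
    simp [Matrix.transpose_apply, Finset.sum_apply]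
  rw [e]
  refine h.trans (Finset.sum_congr rfl fun f _ => ?_)
  rw [MultilinearMap.map_smul_univ, ← Matrix.det_transpose (Matrix.of _)]
  rfl

/-- The Cauchy–Binet formula summed over all index maps `f` rather than the increasing ones;
each `m`-subset is then counted `m!` times. -/
theorem factorial_mul_det {m N : ℕ} (w : Fin m → ℕ → Polynomial ℝ)
    (M : Fin m → ℕ → Polynomial ℝ) :
    ((m.factorial : ℕ) : Polynomial ℝ) *
        Matrix.det (Matrix.of fun a b => ∑ x : Fin N, w b x * M a x) =
      ∑ f : Fin m → Fin N, Matrix.det (Matrix.of fun a b => w a (f b)) *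
        Matrix.det (Matrix.of fun a b => M a (f b)) := by
  have h1 : ∀ σ : Equiv.Perm (Fin m),
      Matrix.det (Matrix.of fun a b => ∑ x : Fin N, w b x * M a x) =
      ∑ f : Fin m → Fin N, ((Equiv.Perm.sign σ : ℤ) : Polynomial ℝ) * (∏ b, w b (f (σ b))) *
        Matrix.det (Matrix.of fun a b => M a (f b)) := by
    intro σ
    rw [det_sum_columns (fun b (x : Fin N) => w b x) (fun _ x => (x : ℕ)) M,
      ← Equiv.sum_comp (Equiv.arrowCongr σ.symm (Equiv.refl (Fin N)))]
    refine Finset.sum_congr rfl fun f _ => ?_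
    have h2 := Matrix.det_permute' σ (Matrix.of fun a b => M a (f b))
    have h3 : (Matrix.of fun a b => M a (f b)).submatrix id σ =
      Matrix.of fun a b => M a (f (σ b)) := rfl
    rw [h3] at h2
    simp only [Equiv.arrowCongr_apply, Equiv.symm_symm, Function.comp, Equiv.refl_apply]
    rw [h2]
    ring
  have h4 : ((m.factorial : ℕ) : Polynomial ℝ) *
        Matrix.det (Matrix.of fun a b => ∑ x : Fin N, w b x * M a x) =
      ∑ _σ : Equiv.Perm (Fin m),
        Matrix.det (Matrix.of fun a b => ∑ x : Fin N, w b x * M a x) := by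
    simp [Fintype.card_perm]
  rw [h4, Finset.sum_congr rfl fun σ _ => h1 σ, Finset.sum_comm]
  refine Finset.sum_congr rfl fun f _ => ?_
  rw [← Finset.sum_mul]
  congr 1
  rw [← Matrix.det_transpose, Matrix.det_apply']
  rfl

/-! ### Minors with a fixed set of rows -/

/-- For the `m` rows of `M`, all maximal minors (on increasing columns) are `q`-nonnegative. -/
def ColPos {m : ℕ} (M : Fin m → ℕ → Polynomial ℝ) : Prop :=
  ∀ j : Fin m → ℕ, StrictMono j → QNonneg (Matrix.det (Matrix.of fun a b => M a (j b)))

theorem det_eq_zero_of_not_injective {m : ℕ} (M : Fin m → ℕ → Polynomial ℝ) (j : Fin m → ℕ)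
    (h : ¬ Function.Injective j) : Matrix.det (Matrix.of fun a b => M a (j b)) = 0 := by
  simp only [Function.Injective, not_forall] at h
  obtain ⟨x, y, hxy, hne⟩ := h
  exact Matrix.det_zero_of_column_eq hne fun k => by simp [hxy]

theorem ColPos.monotone {m : ℕ} {M : Fin m → ℕ → Polynomial ℝ} (hM : ColPos M)
    {j : Fin m → ℕ} (hj : Monotone j) :
    QNonneg (Matrix.det (Matrix.of fun a b => M a (j b))) := by
  by_cases h : Function.Injective j
  · exact hM j (hj.strictMono_of_injective h)
  · rw [det_eq_zero_of_not_injective M j h]; exact qNonneg_zero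

/-- Replacing each column by a `q`-nonnegative combination of two columns, in such a way that
indices used for smaller columns never exceed those used for larger ones, preserves
`q`-nonnegativity of the maximal minors. -/
theorem ColPos.bidiag {m : ℕ} {M : Fin m → ℕ → Polynomial ℝ} (hM : ColPos M)
    (w : ℕ → Bool → Polynomial ℝ) (hw : ∀ k x, QNonneg (w k x)) (φ : ℕ → Bool → ℕ)
    (hφ : ∀ k l x y, k < l → φ k x ≤ φ l y) :
    ColPos fun a k => ∑ x, w k x * M a (φ k x) := by
  intro j hj
  rw [det_sum_columns (fun b x => w (j b) x) (fun b x => φ (j b) x) M]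
  refine qNonneg_sum _ _ fun f _ => (qNonneg_prod _ _ fun b _ => hw _ _).mul ?_
  refine hM.monotone (j := fun b => φ (j b) (f b)) fun a b hab => ?_
  rcases hab.eq_or_lt with rfl | h
  · exact le_rfl
  · exact hφ _ _ _ _ (hj h)

/-- Reordering the columns changes both determinants by the same sign, so the product is
`q`-nonnegative for every column selection. -/
theorem ColPos.det_mul_det {m : ℕ} {M M' : Fin m → ℕ → Polynomial ℝ} (hM : ColPos M)
    (hM' : ColPos M') (f : Fin m → ℕ) :
    QNonneg (Matrix.det (Matrix.of fun a b => M a (f b)) *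
      Matrix.det (Matrix.of fun a b => M' a (f b))) := by
  set σ := Tuple.sort f
  have key : ∀ A : Fin m → ℕ → Polynomial ℝ, Matrix.det (Matrix.of fun a b => A a (f (σ b))) =
      ((Equiv.Perm.sign σ : ℤ) : Polynomial ℝ) * Matrix.det (Matrix.of fun a b => A a (f b)) :=
    fun A => Matrix.det_permute' σ (Matrix.of fun a b => A a (f b))
  have hs : ((Equiv.Perm.sign σ : ℤ) : Polynomial ℝ) * ((Equiv.Perm.sign σ : ℤ) : Polynomial ℝ)
      = 1 := by
    rw [← Int.cast_mul, ← Units.val_mul, Int.units_mul_self]; simp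
  have hmono : Monotone (f ∘ σ) := Tuple.monotone_sort f
  have h := (hM.monotone hmono).mul (hM'.monotone hmono)
  simp only [Function.comp] at h
  rw [key M, key M'] at h
  convert h using 1
  linear_combination (-(Matrix.det (Matrix.of fun a b => M a (f b)) *
      Matrix.det (Matrix.of fun a b => M' a (f b)))) * hs

/-! ### The Catalan–Stieltjes matrix -/

/-- Right multiplication by `J = U L`, carried out one bidiagonal factor at a time. -/
theorem colPos_step (s t b c' : ℕ → Polynomial ℝ) (c : ℕ → ℕ → Polynomial ℝ)
    (hrec0 : ∀ n, c (n + 1) 0 = s 0 * c n 0 + t 1 * c n 1)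
    (hrec : ∀ n k, c (n + 1) (k + 1) =
      c n k + s (k + 1) * c n (k + 1) + t (k + 2) * c n (k + 2))
    (hb : ∀ k, QNonneg (b k)) (hc' : ∀ k, QNonneg (c' k))
    (hs : ∀ k, s k = b k + c' k) (ht : ∀ k, t (k + 1) = b (k + 1) * c' k)
    {m : ℕ} (i : Fin m → ℕ) (h : ColPos fun a k => c (i a) k) :
    ColPos fun a k => c (i a + 1) k := by
  -- Column `k` of `M U` is `b k * M_k + M_{k-1}`; the second weight vanishes at `k = 0`,
  -- where the truncated index `k - 1` has no meaning.
  have hU := h.bidiag (fun k x => if x then (if k = 0 then 0 else 1) else b k)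
    (fun k x => by
      cases x
      · simpa using hb k
      · by_cases hk : k = 0
        · simpa [hk] using qNonneg_zero
        · simpa [hk] using qNonneg_one)
    (fun k x => if x then k - 1 else k)
    (fun k l x y hkl => by cases x <;> cases y <;> simp <;> omega)
  have hL := hU.bidiag (fun k x => if x then c' k else 1)
    (fun k x => by
      cases x
      · simpa using qNonneg_one
      · simpa using hc' k)
    (fun k x => if x then k + 1 else k)
    (fun k l x y hkl => by cases x <;> cases y <;> simp <;> omega)
  convert hL using 3 with a k
  cases k with
  | zero => simp [hrec0, hs, ht 0]; ring
  | succ k => simp [hrec, hs, ht (k + 1)]; ring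

theorem colPos_rows (s t b c' : ℕ → Polynomial ℝ) (c : ℕ → ℕ → Polynomial ℝ)
    (hc00 : c 0 0 = 1) (hupper : ∀ n k, n < k → c n k = 0)
    (hrec0 : ∀ n, c (n + 1) 0 = s 0 * c n 0 + t 1 * c n 1)
    (hrec : ∀ n k, c (n + 1) (k + 1) =
      c n k + s (k + 1) * c n (k + 1) + t (k + 2) * c n (k + 2))
    (hb : ∀ k, QNonneg (b k)) (hc' : ∀ k, QNonneg (c' k))
    (hs : ∀ k, s k = b k + c' k) (ht : ∀ k, t (k + 1) = b (k + 1) * c' k)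
    (n : ℕ) : ∀ (m : ℕ) (i : Fin m → ℕ), StrictMono i → (∀ a, i a < n) →
      ColPos fun a k => c (i a) k := by
  induction n with
  | zero =>
    intro m i _ hlt
    cases m with
    | zero => intro j _; rw [Matrix.det_isEmpty]; exact qNonneg_one
    | succ m => exact absurd (hlt 0) (by omega)
  | succ n ih =>
    have pos : ∀ (m : ℕ) (i : Fin m → ℕ), StrictMono i → (∀ a, i a < n + 1) → (∀ a, 0 < i a) →
        ColPos fun a k => c (i a) k := by
      intro m i hi hlt hpos
      have h := colPos_step s t b c' c hrec0 hrec hb hc' hs ht (fun a => i a - 1)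
        (ih m (fun a => i a - 1)
          (fun x y hxy => by have := hi hxy; have := hpos x; dsimp only; omega)
          (fun a => by have := hlt a; have := hpos a; omega))
      have e : (fun a k => c (i a) k) = fun a k => c (i a - 1 + 1) k := by
        funext a k
        rw [Nat.sub_add_cancel (hpos a)]
      rw [e]
      exact h
    intro m i hi hlt
    cases m with
    | zero => intro j _; rw [Matrix.det_isEmpty]; exact qNonneg_one
    | succ m =>
      have hsucc : ∀ x : Fin m, i 0 < i x.succ := fun x => hi (Fin.succ_pos x)
      rcases Nat.eq_zero_or_pos (i 0) with h0 | h0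
      · intro j hj
        have hjs : ∀ x : Fin m, j 0 < j x.succ := fun x => hj (Fin.succ_pos x)
        -- Row `0` is `(1, 0, 0, …)`, so only the first term of the Laplace expansion survives.
        rw [Matrix.det_succ_row_zero, Fin.sum_univ_succ, Finset.sum_eq_zero, add_zero]
        · refine QNonneg.mul (QNonneg.mul (by simpa using qNonneg_one) ?_) ?_
          · simp only [Matrix.of_apply, h0]
            rcases Nat.eq_zero_or_pos (j 0) with hj0 | hj0
            · rw [hj0, hc00]; exact qNonneg_one
            · rw [hupper 0 _ hj0]; exact qNonneg_zero
          · have h := pos m (fun x => i x.succ) (fun x y hxy => hi (Fin.succ_lt_succ_iff.2 hxy))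
              (fun a => hlt _) (fun a => by have := hsucc a; omega) (fun x => j x.succ)
              (fun x y hxy => hj (Fin.succ_lt_succ_iff.2 hxy))
            convert h using 2
            ext1 a b
            simp
        · intro x _
          simp only [Matrix.of_apply, h0]
          rw [hupper 0 _ (by have := hjs x; omega)]
          ring
      · exact pos _ i hi hlt fun a => by
          have := hi.monotone (Fin.zero_le a)
          omega

/-! ### The Hankel matrix -/

/-- The factorisation `H = C T Cᵀ` with `T k = t 1 ⋯ t k`. -/
theorem hankel_eq (s t : ℕ → Polynomial ℝ) (c : ℕ → ℕ → Polynomial ℝ)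
    (hc00 : c 0 0 = 1) (hupper : ∀ n k, n < k → c n k = 0)
    (hrec0 : ∀ n, c (n + 1) 0 = s 0 * c n 0 + t 1 * c n 1)
    (hrec : ∀ n k, c (n + 1) (k + 1) =
      c n k + s (k + 1) * c n (k + 1) + t (k + 2) * c n (k + 2)) (N i : ℕ) :
    ∀ j, i + j ≤ N → ∑ k ∈ Finset.range (N + 1),
      (∏ l ∈ Finset.range k, t (l + 1)) * c j k * c i k = c (i + j) 0 := by
  -- A discrete Green identity: `J` is symmetric for the weights `T`, up to a boundary term.
  have green : ∀ i j n, ∑ k ∈ Finset.range (n + 1),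
      (∏ l ∈ Finset.range k, t (l + 1)) * (c j k * c (i + 1) k - c (j + 1) k * c i k) =
      (∏ l ∈ Finset.range (n + 1), t (l + 1)) *
        (c i (n + 1) * c j n - c i n * c j (n + 1)) := by
    intro i j n
    induction n with
    | zero => simp [hrec0]; ring
    | succ n ih =>
      rw [Finset.sum_range_succ, ih, hrec, hrec, Finset.prod_range_succ _ (n + 1)]
      ring
  induction i with
  | zero =>
    intro j _
    rw [Finset.sum_range_succ', Finset.sum_eq_zero]
    · simp [hc00]
    · intro k _
      rw [hupper 0 (k + 1) (by omega), mul_zero]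
  | succ i ih =>
    intro j hj
    have h := green i j N
    rw [hupper i (N + 1) (by omega), hupper j (N + 1) (by omega)] at h
    have h2 := ih (j + 1) (by omega)
    rw [show i + 1 + j = i + (j + 1) by ring, ← h2, ← sub_eq_zero, ← Finset.sum_sub_distrib]
    refine Eq.trans (Finset.sum_congr rfl fun k _ => ?_) (h.trans (by ring))
    ring

theorem stmt4 (r s t : ℕ → Polynomial ℝ) (c : ℕ → ℕ → Polynomial ℝ)
    (hr : ∀ k, QNonneg (r k)) (hs : ∀ k, QNonneg (s k)) (ht : ∀ k, 1 ≤ k → QNonneg (t k))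
    (hc00 : c 0 0 = 1)
    (hupper : ∀ n k, n < k → c n k = 0)
    (hrec0 : ∀ n, c (n + 1) 0 = s 0 * c n 0 + t 1 * c n 1)
    (hrec : ∀ n k, c (n + 1) (k + 1) =
      r k * c n k + s (k + 1) * c n (k + 1) + t (k + 2) * c n (k + 2))
    (hcond : (∃ b c' : ℕ → Polynomial ℝ, (∀ k, QNonneg (b k)) ∧ (∀ k, QNonneg (c' k)) ∧
      ∀ k, r k = 1 ∧ s k = b k + c' k ∧ t (k + 1) = b (k + 1) * c' k)) :
    QTP c ∧ QTP (fun i j => c (i + j) 0) := by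
  obtain ⟨b, c', hb, hc', h⟩ := hcond
  have hrec' : ∀ n k, c (n + 1) (k + 1) =
      c n k + s (k + 1) * c n (k + 1) + t (k + 2) * c n (k + 2) := fun n k => by
    rw [hrec, (h k).1, one_mul]
  have hC : ∀ (m : ℕ) (i : Fin m → ℕ), StrictMono i → ColPos fun a k => c (i a) k := by
    intro m i hi
    refine colPos_rows s t b c' c hc00 hupper hrec0 hrec' hb hc' (fun k => (h k).2.1)
      (fun k => (h k).2.2) (∑ a, i a + 1) m i hi fun a => ?_
    have := Finset.single_le_sum (f := i) (fun _ _ => Nat.zero_le _) (Finset.mem_univ a)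
    omega
  refine ⟨fun m _ i j hi hj => hC m i hi j hj, fun m _ i j hi hj => ?_⟩
  set T : ℕ → Polynomial ℝ := fun k => ∏ l ∈ Finset.range k, t (l + 1) with hT
  set N := ∑ a, i a + ∑ a, j a
  have e : (Matrix.of fun a b => c (i a + j b) 0) =
      Matrix.of fun a b => ∑ x : Fin (N + 1), (T x * c (j b) x) * c (i a) x := by
    ext1 a b
    have h1 := Finset.single_le_sum (f := i) (fun _ _ => Nat.zero_le _) (Finset.mem_univ a)
    have h2 := Finset.single_le_sum (f := j) (fun _ _ => Nat.zero_le _) (Finset.mem_univ b)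
    have h3 := hankel_eq s t c hc00 hupper hrec0 hrec' N (i a) (j b) (by omega)
    rw [Matrix.of_apply, Matrix.of_apply, ← h3, Finset.sum_range]
  refine QNonneg.of_natCast_mul m.factorial_pos ?_
  rw [e, factorial_mul_det (fun b x => T x * c (j b) x) (fun a x => c (i a) x)]
  refine qNonneg_sum _ _ fun f _ => ?_
  have hdet : Matrix.det (Matrix.of fun a b => T (f b) * c (j a) (f b)) =
      (∏ b, T (f b)) * Matrix.det (Matrix.of fun a b => c (j a) (f b)) :=
    Matrix.det_mul_row (fun b => T (f b)) (Matrix.of fun a b => c (j a) (f b))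
  rw [hdet, mul_assoc]
  exact (qNonneg_prod _ _ fun b _ => qNonneg_prod _ _ fun l _ => ht _ (by omega)).mul
    ((hC m j hj).det_mul_det (hC m i hi) fun b => f b)
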